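/- arXiv:1107.4382 — 7 statements merged into one kernel-verified Lean document; each statement's English description precedes it below -/
import Mathlib

section
/- Let K ≥ 2 be an integer, σ² > 0, η_1, ..., η_K > 0, and β > 0. There exists a power profile (p_1, ..., p_K) with all p_i > 0 such that SINR_i = β for every player i if and only if (K-1)·β < 1; and in that case the profile is unique and given by p_i = (σ²/η_i)·β/(1 - (K-1)·β). -/
theorem sinr_key (K : ℕ) (σ2 : ℝ) (hσ : 0 < σ2)
    (η : Fin K → ℝ) (hη : ∀ i, 0 < η i) (β : ℝ) (hβ : 0 < β)
    (p : Fin K → ℝ) (hp : ∀ i, 0 < p i)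
    (h : ∀ i, p i * η i / ((∑ j ∈ Finset.univ.erase i, p j * η j) + σ2) = β) (i : Fin K) :
    p i * η i * (1 - ((K : ℝ) - 1) * β) = β * σ2 := by
  have h1 : ∀ i, p i * η i * (1 + β) = β * ((∑ j, p j * η j) + σ2) := by
    intro i
    have hpos : 0 < (∑ j ∈ Finset.univ.erase i, p j * η j) + σ2 :=
      add_pos_of_nonneg_of_pos
        (Finset.sum_nonneg fun j _ => (mul_pos (hp j) (hη j)).le) hσ
    have h2 := (div_eq_iff hpos.ne').1 (h i)
    have h3 := Finset.add_sum_erase Finset.univ (fun j => p j * η j) (Finset.mem_univ i)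
    rw [← h3]
    linarith
  have h4 : (∑ j, p j * η j) * (1 + β) = K * (β * ((∑ j, p j * η j) + σ2)) := by
    rw [Finset.sum_mul, Finset.sum_congr rfl fun j _ => h1 j]
    simp
  have h5 := h1 i
  have h6 : (1 + β) ≠ 0 := by positivity
  apply mul_right_cancel₀ h6
  linear_combination (1 - ((K : ℝ) - 1) * β) * h5 + β * h4

/-- A positive power profile giving every player the common SINR `β > 0` exists
iff `(K-1)*β < 1`; and in that case it is unique, given by
`p_i = (σ²/η_i) * β / (1 - (K-1)*β)`. -/
theorem exists_unique_profile_common_sinr (K : ℕ) (hK : 2 ≤ K) (σ2 : ℝ) (hσ : 0 < σ2)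
    (η : Fin K → ℝ) (hη : ∀ i, 0 < η i) (β : ℝ) (hβ : 0 < β) :
    ((∃ p : Fin K → ℝ, (∀ i, 0 < p i) ∧
        ∀ i, p i * η i / ((∑ j ∈ Finset.univ.erase i, p j * η j) + σ2) = β)
      ↔ ((K : ℝ) - 1) * β < 1) ∧
    (((K : ℝ) - 1) * β < 1 →
      ∀ p : Fin K → ℝ, (∀ i, 0 < p i) →
        (∀ i, p i * η i / ((∑ j ∈ Finset.univ.erase i, p j * η j) + σ2) = β) →
        ∀ i, p i = σ2 / η i * (β / (1 - ((K : ℝ) - 1) * β))) := by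
  have hK1 : (0 : ℝ) ≤ (K : ℝ) - 1 := by
    have : (2 : ℝ) ≤ K := by exact_mod_cast hK
    linarith
  refine ⟨⟨?_, ?_⟩, ?_⟩
  · rintro ⟨p, hp, h⟩
    have i : Fin K := ⟨0, by omega⟩
    have hk := sinr_key K σ2 hσ η hη β hβ p hp h i
    have h1 : 0 < p i * η i * (1 - ((K : ℝ) - 1) * β) := by rw [hk]; positivity
    have h2 := (pos_iff_pos_of_mul_pos h1).1 (mul_pos (hp i) (hη i))
    linarith
  · intro hlt
    have hD : 0 < 1 - ((K : ℝ) - 1) * β := by linarith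
    refine ⟨fun i => σ2 / η i * (β / (1 - ((K : ℝ) - 1) * β)), fun i =>
      mul_pos (div_pos hσ (hη i)) (div_pos hβ hD), fun i => ?_⟩
    have hx : ∀ j, σ2 / η j * (β / (1 - ((K : ℝ) - 1) * β)) * η j
        = σ2 * (β / (1 - ((K : ℝ) - 1) * β)) := by
      intro j
      have := (hη j).ne'
      field_simp
    simp only [hx]
    rw [Finset.sum_const, Finset.card_erase_of_mem (Finset.mem_univ i), Finset.card_univ,
      Fintype.card_fin, nsmul_eq_mul, Nat.cast_sub (by omega), Nat.cast_one]
    have hpos : 0 < ((K : ℝ) - 1) * (σ2 * (β / (1 - ((K : ℝ) - 1) * β))) + σ2 := by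
      have := div_pos hβ hD
      positivity
    rw [div_eq_iff hpos.ne']
    have hc : β / (1 - ((K : ℝ) - 1) * β) * (1 - ((K : ℝ) - 1) * β) = β :=
      div_mul_cancel₀ _ hD.ne'
    linear_combination σ2 * hc
  · intro hlt p hp h i
    have hD : 0 < 1 - ((K : ℝ) - 1) * β := by linarith
    have hk := sinr_key K σ2 hσ η hη β hβ p hp h i
    rw [div_mul_div_comm, eq_div_iff (mul_pos (hη i) hD).ne']
    linear_combination hk
end

section
/- Let a > 0, R > 0, η > 0 and I > 0 (the interference-plus-noise power seen by a player). Define h(p) = R·exp(-a·I/(p·η))/p for p > 0. Then h(p) → 0 as p → 0⁺, h(p) → 0 as p → ∞, and h attains a strict global maximum on (0,∞) at the unique point p* = a·I/η, with h(p*) = R·η/(e·a·I). (Hence a player's best response against fixed interference is the power making its own SINR equal to a.) -/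
/-- For `a, R, η, I > 0`, the utility `h p = R * exp (-a*I/(p*η)) / p` tends to `0`
as `p → 0⁺` and as `p → ∞`, and attains a strict global maximum on `(0,∞)` at the
unique point `p* = a*I/η`, with value `h p* = R*η/(e*a*I)`. -/
theorem best_response_utility (a R η I : ℝ) (ha : 0 < a) (hR : 0 < R) (hη : 0 < η)
    (hI : 0 < I) :
    Filter.Tendsto (fun p : ℝ => R * Real.exp (-(a * I) / (p * η)) / p)
      (nhdsWithin 0 (Set.Ioi 0)) (nhds 0) ∧
    Filter.Tendsto (fun p : ℝ => R * Real.exp (-(a * I) / (p * η)) / p)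
      Filter.atTop (nhds 0) ∧
    R * Real.exp (-(a * I) / ((a * I / η) * η)) / (a * I / η)
      = R * η / (Real.exp 1 * a * I) ∧
    ∀ p : ℝ, 0 < p → p ≠ a * I / η →
      R * Real.exp (-(a * I) / (p * η)) / p < R * η / (Real.exp 1 * a * I) := by
  have hc : 0 < a * I / η := by positivity
  have key : ∀ p : ℝ, R * Real.exp (-(a * I) / (p * η)) / p
      = R / (a * I / η) * (((a * I / η) * p⁻¹) ^ 1 * Real.exp (-((a * I / η) * p⁻¹))) := by
    intro p
    have h1 : -(a * I) / (p * η) = -((a * I / η) * p⁻¹) := by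
      rw [div_eq_mul_inv, mul_inv, div_eq_mul_inv]; ring
    rw [h1]
    generalize Real.exp (-((a * I / η) * p⁻¹)) = E
    rw [div_eq_mul_inv _ p]
    generalize p⁻¹ = q
    field_simp
  refine ⟨?_, ?_, ?_, ?_⟩
  · simp_rw [key]
    have h := (Real.tendsto_pow_mul_exp_neg_atTop_nhds_zero 1).comp
      (tendsto_inv_nhdsGT_zero.const_mul_atTop hc)
    simpa using h.const_mul (R / (a * I / η))
  · simp_rw [key]
    have hx : Filter.Tendsto (fun p : ℝ => (a * I / η) * p⁻¹) Filter.atTop (nhds 0) := by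
      simpa using (tendsto_inv_atTop_zero (𝕜 := ℝ)).const_mul (a * I / η)
    have hf : Continuous (fun x : ℝ => R / (a * I / η) * (x ^ 1 * Real.exp (-x))) := by
      fun_prop
    have h := (hf.tendsto 0).comp hx
    simpa [Function.comp_def] using h
  · have h1 : -(a * I) / ((a * I / η) * η) = -1 := by field_simp
    rw [h1, Real.exp_neg]
    field_simp
  · intro p hp hne
    rw [key]
    have hx1 : (a * I / η) * p⁻¹ - 1 ≠ 0 := by
      intro h
      apply hne
      have h2 : (a * I / η) * p⁻¹ = 1 := by linarith
      rw [← div_eq_mul_inv, div_eq_one_iff_eq hp.ne'] at h2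
      exact h2.symm
    have h3 := Real.add_one_lt_exp hx1
    have h4 : R * η / (Real.exp 1 * a * I) = R / (a * I / η) * Real.exp (-1) := by
      rw [Real.exp_neg]; field_simp
    rw [h4]
    generalize (a * I / η) * p⁻¹ = x at h3
    apply mul_lt_mul_of_pos_left _ (by positivity)
    have h5 : Real.exp (-1) = Real.exp (x - 1) * Real.exp (-x) := by
      rw [← Real.exp_add]; congr 1; ring
    rw [h5, pow_one]
    exact mul_lt_mul_of_pos_right (by linarith) (Real.exp_pos _)
end

section
/- Let K ≥ 1, a > 0, R > 0, σ² > 0 and η_1, ..., η_K > 0. Suppose (p_1, ..., p_K) ∈ (0,∞)^K is a Nash equilibrium of the one-shot game, i.e., for every player i, p_i maximizes p ↦ R·exp(-a·(Σ_{j≠i} p_j·η_j + σ²)/(p·η_i))/p over p > 0. Then the SINR of every player at this profile equals a, i.e., p_i·η_i/(Σ_{j≠i} p_j·η_j + σ²) = a for all i. -/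
/-- At any positive Nash equilibrium of the one-shot energy-efficiency game
(each `p i` maximizes `q ↦ R * exp (-a*(I_i + σ²)/(q*η_i)) / q` over `q > 0`,
where `I_i` is the interference seen by player `i`), the SINR of every player
equals `a`. -/
theorem nash_equilibrium_sinr_eq (K : ℕ) (hK : 1 ≤ K) (a R σ2 : ℝ) (ha : 0 < a)
    (hR : 0 < R) (hσ : 0 < σ2) (η : Fin K → ℝ) (hη : ∀ i, 0 < η i)
    (p : Fin K → ℝ) (hp : ∀ i, 0 < p i)
    (hNash : ∀ i, ∀ q : ℝ, 0 < q →
      R * Real.exp (-(a * ((∑ j ∈ Finset.univ.erase i, p j * η j) + σ2)) / (q * η i)) / q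
        ≤ R * Real.exp
            (-(a * ((∑ j ∈ Finset.univ.erase i, p j * η j) + σ2)) / (p i * η i)) / p i) :
    ∀ i, p i * η i / ((∑ j ∈ Finset.univ.erase i, p j * η j) + σ2) = a := by
  intro i
  have h := hNash i
  have hS : 0 < (∑ j ∈ Finset.univ.erase i, p j * η j) + σ2 :=
    add_pos_of_nonneg_of_pos
      (Finset.sum_nonneg fun j _ => (mul_pos (hp j) (hη j)).le) hσ
  generalize (∑ j ∈ Finset.univ.erase i, p j * η j) + σ2 = S at h hS ⊢
  have hpi := hp i
  have hηi := hη i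
  generalize p i = P at h hpi ⊢
  generalize η i = e at h hηi ⊢
  have hc : 0 < a * S / e := by positivity
  have h1 := h (a * S / e) hc
  have e1 : -(a * S) / (a * S / e * e) = -1 := by field_simp
  rw [e1] at h1
  obtain ⟨x, hx⟩ : ∃ x, x = a * S / (P * e) := ⟨_, rfl⟩
  have e2 : -(a * S) / (P * e) = -x := by rw [hx]; ring
  have e3 : a * S / e = x * P := by rw [hx]; field_simp
  have hx0 : 0 < x := by rw [hx]; positivity
  rw [e2, e3, div_le_div_iff₀ (by positivity) hpi] at h1
  have h2 : Real.exp (-1) ≤ Real.exp (-x) * x := by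
    have hRP : 0 < R * P := by positivity
    refine le_of_mul_le_mul_left ?_ hRP
    linarith
  have h3 : Real.exp (x - 1) ≤ x := by
    have e4 : Real.exp (x - 1) = Real.exp x * Real.exp (-1) := by
      rw [← Real.exp_add]; ring_nf
    have e5 : Real.exp x * Real.exp (-x) = 1 := by
      rw [← Real.exp_add]; simp
    calc Real.exp (x - 1) = Real.exp x * Real.exp (-1) := e4
      _ ≤ Real.exp x * (Real.exp (-x) * x) :=
        mul_le_mul_of_nonneg_left h2 (Real.exp_pos x).le
      _ = x := by rw [← mul_assoc, e5, one_mul]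
  have hx1 : x = 1 := by
    by_contra hne
    have := Real.add_one_lt_exp (sub_ne_zero.mpr hne)
    linarith
  rw [hx1, eq_div_iff (by positivity)] at hx
  rw [div_eq_iff hS.ne']
  linarith
end

section
/- Let K ≥ 2, a > 0, R > 0, σ² > 0 and η_1, ..., η_K > 0. If (K-1)·a < 1, then the one-shot game has a unique Nash equilibrium in positive powers, given by p_i* = (σ²/η_i)·a/(1 - (K-1)·a) for every i; if (K-1)·a ≥ 1, no Nash equilibrium in positive powers exists. -/
/-- A positive power profile is a Nash equilibrium of the one-shot
energy-efficiency game if each `p i` maximizes player `i`'s utility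
`q ↦ R * exp (-a / SINR_i) / q` over `q > 0`, given the other powers. -/
def IsNashEq (K : ℕ) (a R σ2 : ℝ) (η : Fin K → ℝ) (p : Fin K → ℝ) : Prop :=
  (∀ i, 0 < p i) ∧
  ∀ i, ∀ q : ℝ, 0 < q →
    R * Real.exp (-(a * ((∑ j ∈ Finset.univ.erase i, p j * η j) + σ2)) / (q * η i)) / q
      ≤ R * Real.exp
          (-(a * ((∑ j ∈ Finset.univ.erase i, p j * η j) + σ2)) / (p i * η i)) / p i

theorem best_response_iff (R C e p : ℝ) (hR : 0 < R) (hC : 0 < C) (he : 0 < e) (hp : 0 < p) :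
    (∀ q : ℝ, 0 < q → R * Real.exp (-C / (q * e)) / q ≤ R * Real.exp (-C / (p * e)) / p) ↔
      p * e = C := by
  constructor
  · intro h
    have h1 := h (C / e) (by positivity)
    have e1 : -C / (C / e * e) = -1 := by field_simp
    rw [e1] at h1
    obtain ⟨x, hx⟩ : ∃ x, x = C / (p * e) := ⟨_, rfl⟩
    have hx0 : 0 < x := by rw [hx]; positivity
    have e2 : -C / (p * e) = -x := by rw [hx, neg_div]
    rw [e2, div_le_div_iff₀ (by positivity) hp] at h1
    have hC' : C / e = x * p := by rw [hx]; field_simp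
    rw [hC'] at h1
    have h2 : Real.exp (-1) ≤ x * Real.exp (-x) := by
      have : (R * p) * Real.exp (-1) ≤ (R * p) * (x * Real.exp (-x)) := by linarith
      exact le_of_mul_le_mul_left this (by positivity)
    have h3 : Real.exp (x - 1) ≤ x := by
      have e3 : Real.exp (x - 1) = Real.exp (-1) * Real.exp x := by
        rw [← Real.exp_add]; congr 1; ring
      have e4 : Real.exp (-x) * Real.exp x = 1 := by rw [← Real.exp_add]; simp
      calc Real.exp (x - 1) = Real.exp (-1) * Real.exp x := e3
        _ ≤ x * Real.exp (-x) * Real.exp x := by gcongr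
        _ = x := by rw [mul_assoc, e4, mul_one]
    have hx1 : x = 1 := by
      by_contra hne
      have := Real.add_one_lt_exp (sub_ne_zero.mpr hne)
      linarith
    rw [hx1] at hx
    field_simp at hx
    linarith
  · intro h q hq
    obtain ⟨y, hy⟩ : ∃ y, y = p / q := ⟨_, rfl⟩
    have e1 : -C / (q * e) = -y := by rw [← h, hy]; field_simp
    have e2 : -C / (p * e) = -1 := by rw [← h]; field_simp
    have hpy : p = y * q := by rw [hy]; field_simp
    have h3 : y ≤ Real.exp (y - 1) := by linarith [Real.add_one_le_exp (y - 1)]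
    have h4 : y * Real.exp (-y) ≤ Real.exp (-1) := by
      calc y * Real.exp (-y) ≤ Real.exp (y - 1) * Real.exp (-y) := by gcongr
        _ = Real.exp (-1) := by rw [← Real.exp_add]; congr 1; ring
    rw [e1, e2, div_le_div_iff₀ hq hp, hpy]
    have := mul_le_mul_of_nonneg_left h4 (mul_pos hR hq).le
    linarith

theorem isNashEq_iff (K : ℕ) (a R σ2 : ℝ)
    (ha : 0 < a) (hR : 0 < R) (hσ : 0 < σ2) (η : Fin K → ℝ) (hη : ∀ i, 0 < η i)
    (p : Fin K → ℝ) :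
    IsNashEq K a R σ2 η p ↔ (∀ i, 0 < p i) ∧
      ∀ i, p i * η i * (1 + a) = a * ((∑ j, p j * η j) + σ2) := by
  unfold IsNashEq
  refine and_congr_right fun hp => forall_congr' fun i => ?_
  have hs : 0 ≤ ∑ j ∈ Finset.univ.erase i, p j * η j :=
    Finset.sum_nonneg fun j _ => (mul_pos (hp j) (hη j)).le
  rw [best_response_iff R _ (η i) (p i) hR (by positivity) (hη i) (hp i),
    ← Finset.add_sum_erase Finset.univ (fun j => p j * η j) (Finset.mem_univ i)]
  constructor <;> intro h <;> linarith

/-- If `(K-1)*a < 1`, the one-shot game has a unique positive Nash equilibrium,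
given by `p_i* = (σ²/η_i) * a / (1 - (K-1)*a)`; if `(K-1)*a ≥ 1`, no positive
Nash equilibrium exists. -/
theorem nash_equilibrium_existence_uniqueness (K : ℕ) (hK : 2 ≤ K) (a R σ2 : ℝ)
    (ha : 0 < a) (hR : 0 < R) (hσ : 0 < σ2) (η : Fin K → ℝ) (hη : ∀ i, 0 < η i) :
    (((K : ℝ) - 1) * a < 1 →
      (IsNashEq K a R σ2 η (fun i => σ2 / η i * (a / (1 - ((K : ℝ) - 1) * a))) ∧
       ∀ p : Fin K → ℝ, IsNashEq K a R σ2 η p →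
         p = fun i => σ2 / η i * (a / (1 - ((K : ℝ) - 1) * a)))) ∧
    (1 ≤ ((K : ℝ) - 1) * a → ¬ ∃ p : Fin K → ℝ, IsNashEq K a R σ2 η p) := by
  have key : ∀ p : Fin K → ℝ, IsNashEq K a R σ2 η p → 0 < (∑ j, p j * η j) ∧
      (1 - ((K : ℝ) - 1) * a) * (∑ j, p j * η j) = K * a * σ2 := by
    intro p hp
    obtain ⟨hp0, h⟩ := (isNashEq_iff K a R σ2 ha hR hσ η hη p).1 hp
    have : Nonempty (Fin K) := ⟨⟨0, by omega⟩⟩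
    refine ⟨Finset.sum_pos (fun j _ => mul_pos (hp0 j) (hη j)) Finset.univ_nonempty, ?_⟩
    have hs := Finset.sum_congr (rfl : (Finset.univ : Finset (Fin K)) = Finset.univ)
      (fun i _ => h i)
    rw [← Finset.sum_mul] at hs
    simp only [Finset.sum_const, Finset.card_univ, Fintype.card_fin, nsmul_eq_mul] at hs
    linarith
  have hK0 : (0 : ℝ) < K := by exact_mod_cast (by omega : 0 < K)
  refine ⟨fun hlt => ⟨?_, ?_⟩, ?_⟩
  · have hD : 0 < 1 - ((K : ℝ) - 1) * a := by linarith
    rw [isNashEq_iff K a R σ2 ha hR hσ η hη]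
    refine ⟨fun i => ?_, fun i => ?_⟩
    · have := hη i
      positivity
    · have e : ∀ j, σ2 / η j * (a / (1 - ((K : ℝ) - 1) * a)) * η j
          = σ2 * (a / (1 - ((K : ℝ) - 1) * a)) := by
        intro j
        have := (hη j).ne'
        field_simp
      simp only [e, Finset.sum_const, Finset.card_univ, Fintype.card_fin, nsmul_eq_mul]
      have hD' := hD.ne'
      generalize hd : 1 - ((K : ℝ) - 1) * a = D at *
      field_simp
      rw [← hd]
      ring
  · intro p hp
    have hD : 0 < 1 - ((K : ℝ) - 1) * a := by linarith
    obtain ⟨hS, hS2⟩ := key p hp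
    obtain ⟨hp0, h⟩ := (isNashEq_iff K a R σ2 ha hR hσ η hη p).1 hp
    funext i
    have hi := h i
    have hηi := hη i
    generalize (∑ j, p j * η j) = S at *
    have h1 : (1 + a) * (p i * η i * (1 - ((K : ℝ) - 1) * a)) = (1 + a) * (a * σ2) := by
      linear_combination (1 - ((K : ℝ) - 1) * a) * hi + a * hS2
    have h2 := mul_left_cancel₀ (by positivity : (1 + a) ≠ 0) h1
    rw [div_mul_div_comm, eq_div_iff (by positivity)]
    linarith
  · rintro h ⟨p, hp⟩
    obtain ⟨hS, hS2⟩ := key p hp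
    have h1 : 0 < K * a * σ2 := by positivity
    nlinarith
end

section
/- Let K ≥ 2, a > 0, R > 0, σ² > 0, η_1, ..., η_K > 0, and assume 0 < (K-1)·a < 1. Let p̃ be the operating-point profile p̃_i = (σ²/η_i)·γ̃/(1-(K-1)·γ̃) with γ̃ = a/(1+(K-1)·a), and let p* be the one-shot Nash profile p_i* = (σ²/η_i)·a/(1-(K-1)·a). Then for every player i, u_i(p̃)/u_i(p*) = exp(-(K-1)·a)/(1 - (K-1)·a) > 1; in particular the operating point strictly Pareto-dominates the one-shot Nash equilibrium. -/
/-- With `0 < (K-1)*a < 1`, comparing the operating point `p̃` (common SINR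
`γ̃ = a/(1+(K-1)a)`) with the one-shot Nash profile `p*` (common SINR `a`):
for every player the utility ratio equals `exp (-(K-1)*a) / (1 - (K-1)*a) > 1`,
so the operating point strictly Pareto-dominates the Nash equilibrium. -/
theorem operating_point_pareto_dominates_nash (K : ℕ) (hK : 2 ≤ K) (a R σ2 : ℝ)
    (ha : 0 < a) (hR : 0 < R) (hσ : 0 < σ2) (η : Fin K → ℝ) (hη : ∀ i, 0 < η i)
    (ha1 : ((K : ℝ) - 1) * a < 1)
    (γ : ℝ) (hγ : γ = a / (1 + ((K : ℝ) - 1) * a))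
    (ptil : Fin K → ℝ) (hptil : ∀ i, ptil i = σ2 / η i * (γ / (1 - ((K : ℝ) - 1) * γ)))
    (pstar : Fin K → ℝ) (hpstar : ∀ i, pstar i = σ2 / η i * (a / (1 - ((K : ℝ) - 1) * a))) :
    (∀ i,
      (R * Real.exp (-a / (ptil i * η i /
          ((∑ j ∈ Finset.univ.erase i, ptil j * η j) + σ2))) / ptil i) /
      (R * Real.exp (-a / (pstar i * η i /
          ((∑ j ∈ Finset.univ.erase i, pstar j * η j) + σ2))) / pstar i)
        = Real.exp (-(((K : ℝ) - 1) * a)) / (1 - ((K : ℝ) - 1) * a)) ∧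
    1 < Real.exp (-(((K : ℝ) - 1) * a)) / (1 - ((K : ℝ) - 1) * a) ∧
    ∀ i,
      R * Real.exp (-a / (pstar i * η i /
          ((∑ j ∈ Finset.univ.erase i, pstar j * η j) + σ2))) / pstar i
        < R * Real.exp (-a / (ptil i * η i /
            ((∑ j ∈ Finset.univ.erase i, ptil j * η j) + σ2))) / ptil i := by
  have hK' : (2 : ℝ) ≤ (K : ℝ) := by exact_mod_cast hK
  have hsum : ∀ (i : Fin K) (c : ℝ),
      (∑ _j ∈ (Finset.univ : Finset (Fin K)).erase i, c) = ((K : ℝ) - 1) * c := by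
    intro i c
    rw [Finset.sum_const, Finset.card_erase_of_mem (Finset.mem_univ i), Finset.card_univ,
      Fintype.card_fin, nsmul_eq_mul, Nat.cast_sub (by omega)]
    simp
  generalize hm : (K : ℝ) - 1 = m at *
  have hmp : 0 < m := by linarith
  have hma : 0 < m * a := mul_pos hmp ha
  have h1 : 0 < 1 + m * a := by linarith
  have h2 : 0 < 1 - m * a := by linarith
  have hg : γ / (1 - m * γ) = a := by
    have h3 : 1 - m * γ = 1 / (1 + m * a) := by
      rw [hγ]; field_simp; ring
    rw [h3, hγ]; field_simp
  have ht : ∀ i, ptil i * η i = σ2 * a := by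
    intro i
    have := (hη i).ne'
    rw [hptil, hg]; field_simp
  have hs : ∀ i, pstar i * η i = σ2 * (a / (1 - m * a)) := by
    intro i
    have := (hη i).ne'
    rw [hpstar]; field_simp
  have et : ∀ i, -a / (ptil i * η i /
      ((∑ j ∈ Finset.univ.erase i, ptil j * η j) + σ2)) = -(m * a) + -1 := by
    intro i
    simp only [ht, hsum]
    field_simp
    ring
  have es : ∀ i, -a / (pstar i * η i /
      ((∑ j ∈ Finset.univ.erase i, pstar j * η j) + σ2)) = -1 := by
    intro i
    simp only [hs, hsum]
    have h8 : m * (σ2 * (a / (1 - m * a))) + σ2 = σ2 / (1 - m * a) := by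
      have h9 := h2.ne'
      rw [eq_div_iff h9, add_mul, mul_assoc m, mul_assoc σ2, div_mul_cancel₀ a h9]
      ring
    have h9 := h2.ne'
    rw [h8]
    generalize 1 - m * a = d at *
    field_simp
  have hpt : ∀ i, 0 < ptil i := by
    intro i
    have := hη i
    rw [hptil, hg]; positivity
  have hps : ∀ i, pstar i = ptil i / (1 - m * a) := by
    intro i
    rw [hpstar, hptil, hg]; ring
  have hone : 1 < Real.exp (-(m * a)) / (1 - m * a) := by
    rw [one_lt_div h2]
    have := Real.add_one_lt_exp (x := -(m * a)) (by linarith)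
    linarith
  have hratio : ∀ i,
      (R * Real.exp (-a / (ptil i * η i /
          ((∑ j ∈ Finset.univ.erase i, ptil j * η j) + σ2))) / ptil i) /
      (R * Real.exp (-a / (pstar i * η i /
          ((∑ j ∈ Finset.univ.erase i, pstar j * η j) + σ2))) / pstar i)
        = Real.exp (-(m * a)) / (1 - m * a) := by
    intro i
    have h4 := (hpt i).ne'
    have h5 := (Real.exp_pos (-1)).ne'
    rw [et, es, hps, Real.exp_add]
    generalize Real.exp (-1) = e at *
    generalize Real.exp (-(m * a)) = E at *
    field_simp
  refine ⟨hratio, hone, fun i => ?_⟩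
  have h6 := hratio i
  rw [← h6, one_lt_div] at hone
  · exact hone
  · have h7 : 0 < pstar i := by rw [hps]; exact div_pos (hpt i) h2
    positivity
end

section
/- Let a > 0 and K ≥ 2 an integer. The function g(γ) = exp(-a/γ)·(1 - (K-1)·γ)/γ on the interval (0, 1/(K-1)) attains a strict global maximum at the unique point γ̃_K = a/(1 + (K-1)·a), with maximal value g(γ̃_K) = exp(-(1 + (K-1)·a))/a. (g is, up to the positive factor R·η_i/σ², the utility of player i when all K players transmit at the common SINR γ.) -/
/-- For `a > 0` and `K ≥ 2`, the function `g γ = exp (-a/γ) * (1-(K-1)γ)/γ` on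
`(0, 1/(K-1))` attains a strict global maximum at the unique point
`γ̃_K = a/(1+(K-1)a)`, with value `exp (-(1+(K-1)a))/a`. -/
theorem symmetric_utility_strict_max (a : ℝ) (ha : 0 < a) (K : ℕ) (hK : 2 ≤ K) :
    a / (1 + ((K : ℝ) - 1) * a) ∈ Set.Ioo (0 : ℝ) (1 / ((K : ℝ) - 1)) ∧
    Real.exp (-a / (a / (1 + ((K : ℝ) - 1) * a)))
        * (1 - ((K : ℝ) - 1) * (a / (1 + ((K : ℝ) - 1) * a)))
        / (a / (1 + ((K : ℝ) - 1) * a))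
      = Real.exp (-(1 + ((K : ℝ) - 1) * a)) / a ∧
    ∀ γ ∈ Set.Ioo (0 : ℝ) (1 / ((K : ℝ) - 1)), γ ≠ a / (1 + ((K : ℝ) - 1) * a) →
      Real.exp (-a / γ) * (1 - ((K : ℝ) - 1) * γ) / γ
        < Real.exp (-(1 + ((K : ℝ) - 1) * a)) / a := by
  have hm : (0 : ℝ) < (K : ℝ) - 1 := by
    have : (2 : ℝ) ≤ K := by exact_mod_cast hK
    linarith
  generalize (K : ℝ) - 1 = m at hm ⊢
  have hma : 0 < 1 + m * a := by positivity
  refine ⟨⟨by positivity, ?_⟩, ?_, ?_⟩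
  · rw [div_lt_div_iff₀ hma hm]
    linarith
  · have h1 : -a / (a / (1 + m * a)) = -(1 + m * a) := by
      field_simp
    have h2 : (1 - m * (a / (1 + m * a))) / (a / (1 + m * a)) = 1 / a := by
      field_simp
      ring
    rw [h1, mul_div_assoc, h2, mul_one_div]
  · rintro γ ⟨hγ, -⟩ hne
    have ht : a * (1 / γ - m) - 1 ≠ 0 := by
      intro h
      apply hne
      rw [eq_div_iff hma.ne']
      field_simp at h
      linarith
    have h1 := Real.add_one_lt_exp ht
    have h2 : -(1 + m * a) = -a / γ + (a * (1 / γ - m) - 1) := by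
      ring
    have h3 : (1 - m * γ) / γ = 1 / γ - m := by
      field_simp
    rw [h2, Real.exp_add, mul_div_assoc, mul_div_assoc, h3]
    apply mul_lt_mul_of_pos_left _ (Real.exp_pos _)
    rw [lt_div_iff₀ ha]
    linarith
end

section
/- Let K ≥ 1, a > 0, R > 0, σ² > 0 and η_1, ..., η_K > 0. For a nonempty set S of k players transmitting at the operating point (i.e., each i ∈ S uses power (σ²/η_i)·γ̃_k/(1-(k-1)·γ̃_k) with γ̃_k = a/(1+(k-1)·a), while players outside S use power 0 and get utility 0), the sum of instantaneous utilities equals C_k·Σ_{i∈S} η_i with C_k = R·exp(-(1+(k-1)·a))/(a·σ²) > 0. Consequently, for fixed cardinality k, the sum of utilities over all k-element subsets S is maximized exactly by the sets consisting of k players with the k largest channel gains η_i. -/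
/-- Power used by player `j` when the set `S` of players transmits at the
operating point with per-user SINR `γ̃_k = a/(1+(k-1)a)`, `k = S.card`,
and the players outside `S` are silent. -/
noncomputable def smuPower (K : ℕ) (a σ2 : ℝ) (η : Fin K → ℝ) (S : Finset (Fin K))
    (j : Fin K) : ℝ :=
  if j ∈ S then
    σ2 / η j * ((a / (1 + ((S.card : ℝ) - 1) * a)) /
      (1 - ((S.card : ℝ) - 1) * (a / (1 + ((S.card : ℝ) - 1) * a))))
  else 0

/-- Sum of instantaneous utilities of the transmitting players of `S` at the
operating-point profile `smuPower` (silent players have utility 0). -/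
noncomputable def smuSumUtility (K : ℕ) (a R σ2 : ℝ) (η : Fin K → ℝ)
    (S : Finset (Fin K)) : ℝ :=
  ∑ i ∈ S,
    R * Real.exp (-a / (smuPower K a σ2 η S i * η i /
        ((∑ j ∈ Finset.univ.erase i, smuPower K a σ2 η S j * η j) + σ2)))
      / smuPower K a σ2 η S i

theorem smuPower_mem (K : ℕ) (a σ2 : ℝ) (ha : 0 < a) (η : Fin K → ℝ)
    (S : Finset (Fin K)) (j : Fin K) (hj : j ∈ S) :
    smuPower K a σ2 η S j = σ2 / η j * a := by
  have hc : (1 : ℝ) ≤ (S.card : ℝ) := by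
    exact_mod_cast Finset.card_pos.mpr ⟨j, hj⟩
  have hd : 0 < 1 + ((S.card : ℝ) - 1) * a := by
    have := mul_nonneg (sub_nonneg.mpr hc) ha.le
    linarith
  have h1 : 1 - ((S.card : ℝ) - 1) * (a / (1 + ((S.card : ℝ) - 1) * a))
      = 1 / (1 + ((S.card : ℝ) - 1) * a) := by
    rw [eq_div_iff hd.ne', sub_mul, mul_assoc, div_mul_cancel₀ _ hd.ne']
    ring
  unfold smuPower
  rw [if_pos hj, h1, div_div_div_cancel_right₀ hd.ne', div_one]

theorem smuSum_eq (K : ℕ) (a R σ2 : ℝ)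
    (ha : 0 < a) (hσ : 0 < σ2) (η : Fin K → ℝ) (hη : ∀ i, 0 < η i)
    (S : Finset (Fin K)) :
    smuSumUtility K a R σ2 η S
        = R * Real.exp (-(1 + ((S.card : ℝ) - 1) * a)) / (a * σ2) * ∑ i ∈ S, η i := by
  have hp : ∀ j ∈ S, smuPower K a σ2 η S j * η j = a * σ2 := by
    intro j hj
    rw [smuPower_mem K a σ2 ha η S j hj]
    have := (hη j).ne'
    field_simp
  have htot : ∑ j, smuPower K a σ2 η S j * η j = (S.card : ℝ) * (a * σ2) := by
    rw [← Finset.sum_subset (Finset.subset_univ S), Finset.sum_congr rfl hp]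
    · simp
    · intro j _ hj
      simp [smuPower, hj]
  unfold smuSumUtility
  rw [Finset.mul_sum]
  refine Finset.sum_congr rfl fun i hi => ?_
  have he : (∑ j ∈ Finset.univ.erase i, smuPower K a σ2 η S j * η j)
      = ((S.card : ℝ) - 1) * (a * σ2) := by
    have := Finset.add_sum_erase Finset.univ (fun j => smuPower K a σ2 η S j * η j)
      (Finset.mem_univ i)
    simp only [htot, hp i hi] at this
    linarith
  have hs : -a / (a * σ2 / (((S.card : ℝ) - 1) * (a * σ2) + σ2))
      = -(1 + ((S.card : ℝ) - 1) * a) := by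
    rw [div_div_eq_mul_div, div_eq_iff (by positivity)]
    ring
  rw [he, hp i hi, hs, smuPower_mem K a σ2 ha η S i hi]
  have := (hη i).ne'
  field_simp

theorem best_sum (K : ℕ) (η : Fin K → ℝ) (S : Finset (Fin K)) :
    (∀ T : Finset (Fin K), T.card = S.card → ∑ i ∈ T, η i ≤ ∑ i ∈ S, η i)
      ↔ ∀ i ∈ S, ∀ j ∉ S, η j ≤ η i := by
  constructor
  · intro h i hi j hj
    have hj' : j ∉ S.erase i := fun h => hj (Finset.mem_of_mem_erase h)
    have := h (insert j (S.erase i)) (by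
      rw [Finset.card_insert_of_notMem hj', Finset.card_erase_add_one hi])
    rw [Finset.sum_insert hj', ← Finset.add_sum_erase S η hi] at this
    linarith
  · intro h T hT
    have hc : (T \ S).card = (S \ T).card := Finset.card_sdiff_comm hT
    have h1 := Finset.sum_inter_add_sum_sdiff T S η
    have h2 := Finset.sum_inter_add_sum_sdiff S T η
    rw [Finset.inter_comm] at h2
    suffices hk : ∑ i ∈ T \ S, η i ≤ ∑ i ∈ S \ T, η i by linarith
    rcases (S \ T).eq_empty_or_nonempty with he | hne
    · have : T \ S = ∅ := by
        rw [← Finset.card_eq_zero, hc, he, Finset.card_empty]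
      rw [he, this]
    · obtain ⟨m, hm, hmin⟩ := Finset.exists_min_image (S \ T) η hne
      calc ∑ i ∈ T \ S, η i ≤ (T \ S).card • η m :=
            Finset.sum_le_card_nsmul _ _ _ fun j hj =>
              h m (Finset.mem_sdiff.mp hm).1 j (Finset.mem_sdiff.mp hj).2
        _ = (S \ T).card • η m := by rw [hc]
        _ ≤ _ := Finset.card_nsmul_le_sum _ _ _ hmin

/-- For a nonempty set `S` of `k` transmitting players at the operating point,
the sum of utilities equals `C_k * ∑_{i∈S} η_i` with
`C_k = R * exp (-(1+(k-1)a)) / (a σ²) > 0`; consequently, among the sets of the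
same cardinality `k`, `S` maximizes the sum of utilities iff it consists of
players with the `k` largest channel gains. -/
theorem smu_sum_utility_and_best_users (K : ℕ) (hK : 1 ≤ K) (a R σ2 : ℝ)
    (ha : 0 < a) (hR : 0 < R) (hσ : 0 < σ2) (η : Fin K → ℝ) (hη : ∀ i, 0 < η i)
    (S : Finset (Fin K)) (hS : S.Nonempty) :
    smuSumUtility K a R σ2 η S
        = R * Real.exp (-(1 + ((S.card : ℝ) - 1) * a)) / (a * σ2) * ∑ i ∈ S, η i ∧
    0 < R * Real.exp (-(1 + ((S.card : ℝ) - 1) * a)) / (a * σ2) ∧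
    ((∀ T : Finset (Fin K), T.card = S.card →
        smuSumUtility K a R σ2 η T ≤ smuSumUtility K a R σ2 η S)
      ↔ ∀ i ∈ S, ∀ j ∉ S, η j ≤ η i) := by
  have hC : 0 < R * Real.exp (-(1 + ((S.card : ℝ) - 1) * a)) / (a * σ2) := by positivity
  refine ⟨smuSum_eq K a R σ2 ha hσ η hη S, hC, ?_⟩
  rw [← best_sum K η S]
  refine forall_congr' fun T => forall_congr' fun hT => ?_
  rw [smuSum_eq K a R σ2 ha hσ η hη S, smuSum_eq K a R σ2 ha hσ η hη T, hT]
  exact mul_le_mul_iff_right₀ hC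
end
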